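/- arXiv:1006.1928 — 4 statements merged into one kernel-verified Lean document; each statement's English description precedes it below -/
import Mathlib

section
/- Assume F is locally connected, σ-compact and locally compact. Let Φ ∈ E_F^R and let r satisfy the standing assumptions including (A_r), with condition (C_{r,R}). Let {f_n} be a sequence in Hom(F) such that (C1) for every compact K ⊆ F the restrictions {f_n|_K} and {f_n⁻¹|_K} are uniformly bounded, and (C2) {f_n} is ρ⁺_{Φ,r}-Cauchy. Then {f_n} converges in T⁻(ρ_{Φ,r}) towards an element of Hom(F): there exists f ∈ Hom(F) with ρ_{Φ,r}(f, f_n) → 0 as n → ∞. -/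
open Filter Topology
open scoped ENNReal

noncomputable section

/-- `|f|_{Φ,r} = sup_{x ∈ F} r(‖f(x) − x‖)/Φ(x) ∈ [0,∞]`. -/
def phiNorm {E : Type*} [NormedAddCommGroup E] (F : Set E) (Φ : F → ℝ) (r : ℝ → ℝ)
    (f : F → F) : ℝ≥0∞ :=
  ⨆ x : F, ENNReal.ofReal (r ‖(f x : E) - (x : E)‖ / Φ x)

/-- The premetric `ρ_{Φ,r}(f,g) = max(|f∘g⁻¹|_{Φ,r}, |f⁻¹∘g|_{Φ,r})`. -/
def phiDist {E : Type*} [NormedAddCommGroup E] (F : Set E) (Φ : F → ℝ) (r : ℝ → ℝ)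
    (f g : F ≃ₜ F) : ℝ≥0∞ :=
  max (phiNorm F Φ r fun x => f (g.symm x)) (phiNorm F Φ r fun x => f.symm (g x))

/-- `H_{Φ,r} = {f ∈ Hom(F) : |f|_{Φ,r} < ∞ and |f⁻¹|_{Φ,r} < ∞}`. -/
def Hgroup {E : Type*} [NormedAddCommGroup E] (F : Set E) (Φ : F → ℝ) (r : ℝ → ℝ) :
    Set (F ≃ₜ F) :=
  {f | phiNorm F Φ r ⇑f < ⊤ ∧ phiNorm F Φ r ⇑f.symm < ⊤}

/-- A growth function `R : [0,∞) → (0,∞)`: continuous and subadditive. -/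
structure GrowthFun (R : ℝ → ℝ) : Prop where
  pos : ∀ u, 0 ≤ u → 0 < R u
  cont : ContinuousOn R (Set.Ici 0)
  subadd : ∀ u v, 0 ≤ u → 0 ≤ v → R (u + v) ≤ R u + R v

/-- `Φ ∈ E_F^R`, with constants `m` (condition (G1)) and `β > γ > 0` (condition (G3));
condition (G2) is the coercivity. -/
structure MemE {E : Type*} [NormedAddCommGroup E] (F : Set E) (R : ℝ → ℝ) (Φ : F → ℝ)
    (m β γ : ℝ) : Prop where
  cont : Continuous Φ
  nonneg : ∀ x : F, 0 ≤ Φ x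
  m_pos : 0 < m
  m_le : ∀ x : F, m ≤ Φ x
  coercive : ∀ C : ℝ, ∃ M : ℝ, ∀ x : F, M ≤ ‖(x : E)‖ → C ≤ Φ x
  gamma_pos : 0 < γ
  gamma_lt_beta : γ < β
  lower : ∀ x : F, γ * R ‖(x : E)‖ ≤ Φ x
  upper : ∀ x : F, Φ x ≤ β * R ‖(x : E)‖

/-- The standing assumptions on `r : [0,∞) → [0,∞)`: `r(x) = 0` iff `x = 0`, continuity
at `0`, nondecreasing, subadditive. -/
structure StandingR (r : ℝ → ℝ) : Prop where
  nonneg : ∀ u, 0 ≤ u → 0 ≤ r u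
  zero_iff : ∀ u, 0 ≤ u → (r u = 0 ↔ u = 0)
  cont_at_zero : ContinuousWithinAt r (Set.Ici 0) 0
  mono : MonotoneOn r (Set.Ici 0)
  subadd : ∀ u v, 0 ≤ u → 0 ≤ v → r (u + v) ≤ r u + r v

/-- Condition `(A_r)`: lower semicontinuity of `r` for the simple convergence on `F`. -/
def Ar {E : Type*} [NormedAddCommGroup E] (F : Set E) (r : ℝ → ℝ) : Prop :=
  ∀ (g : ℕ → F → F) (x : F),
    r (Filter.liminf (fun n => ‖(g n x : E)‖) Filter.atTop) ≤
      Filter.liminf (fun n => r ‖(g n x : E)‖) Filter.atTop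

/-- The ball `B⁻(f,α) = {g ∈ H_{Φ,r} : ρ_{Φ,r}(f,g) < α}`. -/
def BallMinus {E : Type*} [NormedAddCommGroup E] (F : Set E) (Φ : F → ℝ) (r : ℝ → ℝ)
    (f : F ≃ₜ F) (α : ℝ) : Set (F ≃ₜ F) :=
  {g | g ∈ Hgroup F Φ r ∧ phiDist F Φ r f g < ENNReal.ofReal α}

/-- The ball `B⁺(f,α) = {g ∈ H_{Φ,r} : ρ_{Φ,r}(g,f) < α}`. -/
def BallPlus {E : Type*} [NormedAddCommGroup E] (F : Set E) (Φ : F → ℝ) (r : ℝ → ℝ)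
    (f : F ≃ₜ F) (α : ℝ) : Set (F ≃ₜ F) :=
  {g | g ∈ Hgroup F Φ r ∧ phiDist F Φ r g f < ENNReal.ofReal α}

/-- The family `T⁻(ρ_{Φ,r})`. -/
def Tminus {E : Type*} [NormedAddCommGroup E] (F : Set E) (Φ : F → ℝ) (r : ℝ → ℝ) :
    Set (Set (F ≃ₜ F)) :=
  {H | H ⊆ Hgroup F Φ r ∧ ∀ f ∈ H, ∃ α : ℝ, 0 < α ∧ BallMinus F Φ r f α ⊆ H}

/-- The family `T⁺(ρ_{Φ,r})`. -/
def Tplus {E : Type*} [NormedAddCommGroup E] (F : Set E) (Φ : F → ℝ) (r : ℝ → ℝ) :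
    Set (Set (F ≃ₜ F)) :=
  {H | H ⊆ Hgroup F Φ r ∧ ∀ f ∈ H, ∃ α : ℝ, 0 < α ∧ BallPlus F Φ r f α ⊆ H}

/-- The `r`-Lipschitz constant `λ_r(f) ∈ [0,∞]`. -/
def lambdaR {E : Type*} [NormedAddCommGroup E] (F : Set E) (r : ℝ → ℝ) (f : F → F) : ℝ≥0∞ :=
  ⨆ (x : F) (y : F) (_ : x ≠ y),
    ENNReal.ofReal (r ‖(f x : E) - (f y : E)‖ / r ‖(x : E) - (y : E)‖)

/-- `L_r(F)`, the set of `r`-Lipeomorphisms of `F`. -/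
def LipGroup {E : Type*} [NormedAddCommGroup E] (F : Set E) (r : ℝ → ℝ) : Set (F ≃ₜ F) :=
  {f | lambdaR F r ⇑f < ⊤ ∧ lambdaR F r ⇑f.symm < ⊤}

/-- The conjugacy operator `L_{f,g}(h) = f ∘ h ∘ g⁻¹`. -/
def conjOp {E : Type*} [NormedAddCommGroup E] (F : Set E) (f g : F ≃ₜ F) :
    (F ≃ₜ F) → (F ≃ₜ F) :=
  fun h => (g.symm.trans h).trans f
lemma limit_aux {E : Type*} [NormedAddCommGroup E] [NormedSpace ℝ E] [FiniteDimensional ℝ E]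
    (F : Set E) [LocallyCompactSpace ↥F] (Φ : F → ℝ)
    (r : ℝ → ℝ) (hr : StandingR r)
    (B D : ℝ) (hB : 0 < B) (hD : 0 < D) (hΦB : ∀ x : F, Φ x ≤ B * r ‖(x : E)‖ + D)
    (fn : ℕ → F ≃ₜ F)
    (hC1 : ∀ K : Set F, IsCompact K → ∃ M : ℝ, ∀ n : ℕ, ∀ x ∈ K, ‖(fn n x : E)‖ ≤ M)
    (H : ∀ ε : ℝ, 0 < ε → ∃ N : ℕ, ∀ p q : ℕ, N ≤ q → q ≤ p → ∀ x : F,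
      r ‖(fn p ((fn q).symm x) : E) - (x : E)‖ ≤ ε * Φ x ∧
      r ‖((fn p).symm (fn q x) : E) - (x : E)‖ ≤ ε * Φ x) :
    ∃ f : F → F, TendstoLocallyUniformly (fun n x => fn n x) f atTop := by
  have : CompleteSpace E := FiniteDimensional.complete ℝ E
  have rpos : ∀ δ, 0 < δ → 0 < r δ := fun δ hδ =>
    lt_of_le_of_ne (hr.nonneg δ hδ.le) fun h => hδ.ne' ((hr.zero_iff δ hδ.le).1 h.symm)
  have rsmall : ∀ δ u, 0 < δ → r u < r δ → u < δ := by
    intro δ u hδ h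
    by_contra! hc
    exact absurd (hr.mono (Set.mem_Ici.2 hδ.le) (Set.mem_Ici.2 (hδ.le.trans hc)) hc)
      (not_le.2 h)
  -- uniform Cauchy on compact sets
  have hUC : ∀ K : Set F, IsCompact K → ∀ δ : ℝ, 0 < δ → ∃ N : ℕ, ∀ p q : ℕ, N ≤ q → q ≤ p →
      ∀ y ∈ K, ‖(fn p y : E) - (fn q y : E)‖ < δ := by
    intro K hK δ hδ
    obtain ⟨M, hM⟩ := hC1 K hK
    have hT : 0 < B * r |M| + D := by
      have := hr.nonneg |M| (abs_nonneg M)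
      positivity
    have hε : 0 < r δ / (2 * (B * r |M| + D)) := div_pos (rpos δ hδ) (by positivity)
    obtain ⟨N, hN⟩ := H _ hε
    refine ⟨N, fun p q hq hp y hy => rsmall _ _ hδ ?_⟩
    have h1 := (hN p q hq hp (fn q y)).1
    simp only [Homeomorph.symm_apply_apply] at h1
    have h2 : Φ (fn q y) ≤ B * r |M| + D := by
      refine (hΦB _).trans ?_
      have : r ‖(fn q y : E)‖ ≤ r |M| :=
        hr.mono (Set.mem_Ici.2 (norm_nonneg _)) (Set.mem_Ici.2 (abs_nonneg _))
          ((hM q y hy).trans (le_abs_self M))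
      gcongr
    calc _ ≤ _ := h1
      _ ≤ r δ / (2 * (B * r |M| + D)) * (B * r |M| + D) := by gcongr
      _ = r δ / 2 := by field_simp
      _ < r δ := by linarith [rpos δ hδ]
  have hlim : ∀ x : F, ∃ z : F, Tendsto (fun n => fn n x) atTop (𝓝 z) := by
    intro x
    have hc : CauchySeq (fun n => (fn n x : E)) := by
      rw [Metric.cauchySeq_iff']
      intro δ hδ
      obtain ⟨N, hN⟩ := hUC {x} isCompact_singleton δ hδ
      exact ⟨N, fun n hn => by rw [dist_eq_norm]; exact hN n N le_rfl hn x rfl⟩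
    obtain ⟨z, hz⟩ := cauchySeq_tendsto_of_complete hc
    obtain ⟨K, hK, hKx⟩ := exists_compact_mem_nhds x
    obtain ⟨δ, hδ, hδK⟩ := Metric.mem_nhds_iff.1 hKx
    have hrδ := rpos δ hδ
    have hT : 0 < B * r ‖(x : E)‖ + D := by
      have := hr.nonneg ‖(x : E)‖ (norm_nonneg _)
      positivity
    set T := B * r ‖(x : E)‖ + D with hTdef
    set ε := r δ / (2 * (T + B * r δ)) with hεdef
    have hε : 0 < ε := by positivity
    have hεeq : ε * T + ε * B * r δ = r δ / 2 := by
      rw [hεdef]; field_simp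
    obtain ⟨q, hq⟩ := H ε hε
    have hmem : ∀ p, q ≤ p → (fn q).symm (fn p x) ∈ K := by
      intro p hp
      apply hδK
      rw [Metric.mem_ball, Subtype.dist_eq, dist_eq_norm]
      apply rsmall _ _ hδ
      have h1 := (hq p q le_rfl hp ((fn q).symm (fn p x))).2
      simp only [Homeomorph.apply_symm_apply, Homeomorph.symm_apply_apply] at h1
      set y := (fn q).symm (fn p x)
      rw [norm_sub_rev] at h1
      set d := ‖(y : E) - (x : E)‖ with hd
      have hd0 : 0 ≤ d := norm_nonneg _
      have h2 : r ‖(y : E)‖ ≤ r ‖(x : E)‖ + r d := by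
        refine le_trans (hr.mono (Set.mem_Ici.2 (norm_nonneg _))
          (Set.mem_Ici.2 (add_nonneg (norm_nonneg _) hd0)) ?_) (hr.subadd _ _ (norm_nonneg _) hd0)
        exact norm_le_norm_add_norm_sub' _ _
      have h3 : Φ y ≤ T + B * r d := by
        have := hΦB y
        nlinarith
      have h4 : r d ≤ ε * T + ε * B * r d := by nlinarith
      by_contra! hcon
      have h5 : ε * B < 1 := by
        have : 0 < ε * T := by positivity
        nlinarith
      nlinarith
    have hKc : IsCompact ((fun w : F => (fn q w : E)) '' K) :=
      hK.image (continuous_subtype_val.comp (fn q).continuous)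
    have hzK : z ∈ (fun w : F => (fn q w : E)) '' K := by
      refine hKc.isClosed.mem_of_tendsto hz ?_
      filter_upwards [eventually_ge_atTop q] with p hp
      exact ⟨_, hmem p hp, by simp⟩
    obtain ⟨w, -, hw⟩ := hzK
    refine ⟨fn q w, ?_⟩
    rw [tendsto_subtype_rng]
    simpa [hw] using hz
  choose f hf using hlim
  refine ⟨f, ?_⟩
  rw [tendstoLocallyUniformly_iff_forall_isCompact]
  intro K hK
  rw [Metric.tendstoUniformlyOn_iff]
  intro δ hδ
  obtain ⟨N, hN⟩ := hUC K hK (δ / 2) (half_pos hδ)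
  filter_upwards [eventually_ge_atTop N] with q hq y hy
  have h1 : Tendsto (fun p => dist (fn p y) (fn q y)) atTop (𝓝 (dist (f y) (fn q y))) :=
    (hf y).dist tendsto_const_nhds
  have : dist (f y) (fn q y) ≤ δ / 2 := by
    refine le_of_tendsto h1 ?_
    filter_upwards [eventually_ge_atTop q] with p hp
    rw [Subtype.dist_eq, dist_eq_norm]
    exact (hN p q hq hp y hy).le
  linarith

lemma phiNorm_le_of {E : Type*} [NormedAddCommGroup E] (F : Set E) (Φ : F → ℝ) (r : ℝ → ℝ)
    (hΦ : ∀ x, 0 < Φ x) (g : F → F) (ε : ℝ)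
    (h : ∀ x : F, r ‖(g x : E) - (x : E)‖ ≤ ε * Φ x) : phiNorm F Φ r g ≤ ENNReal.ofReal ε :=
  iSup_le fun x => ENNReal.ofReal_le_ofReal ((div_le_iff₀ (hΦ x)).2 (h x))

lemma of_phiNorm_le {E : Type*} [NormedAddCommGroup E] (F : Set E) (Φ : F → ℝ) (r : ℝ → ℝ)
    (hΦ : ∀ x, 0 < Φ x) (g : F → F) (ε : ℝ) (hε : 0 ≤ ε)
    (h : phiNorm F Φ r g ≤ ENNReal.ofReal ε) (x : F) :
    r ‖(g x : E) - (x : E)‖ ≤ ε * Φ x :=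
  (div_le_iff₀ (hΦ x)).1 ((ENNReal.ofReal_le_ofReal_iff hε).1
    ((le_iSup (fun x : F => ENNReal.ofReal (r ‖(g x : E) - (x : E)‖ / Φ x)) x).trans h))

/-- Passing to the limit in the estimate. -/
lemma limit_est {E : Type*} [NormedAddCommGroup E] (F : Set E) (r : ℝ → ℝ) (hr : StandingR r)
    (u : ℕ → F) (z x : F) (hu : Tendsto u atTop (𝓝 z)) (c : ℝ)
    (h : ∀ᶠ n in atTop, r ‖(u n : E) - (x : E)‖ ≤ c) : r ‖(z : E) - (x : E)‖ ≤ c := by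
  have hu' : Tendsto (fun n => (u n : E)) atTop (𝓝 (z : E)) :=
    (continuous_subtype_val.tendsto z).comp hu
  have h0 : Tendsto (fun n => ‖(z : E) - (u n : E)‖) atTop (𝓝 0) := by
    have := (tendsto_const_nhds (x := (z : E)) (f := atTop)).sub hu'
    simpa using this.norm
  have hr0 : r 0 = 0 := (hr.zero_iff 0 le_rfl).2 rfl
  have h1 : Tendsto (fun n => r ‖(z : E) - (u n : E)‖) atTop (𝓝 0) := by
    have hc := hr.cont_at_zero
    rw [ContinuousWithinAt, hr0] at hc
    exact hc.comp (tendsto_nhdsWithin_iff.2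
      ⟨h0, Eventually.of_forall fun n => Set.mem_Ici.2 (norm_nonneg _)⟩)
  have h2 : Tendsto (fun n => r ‖(z : E) - (u n : E)‖ + c) atTop (𝓝 c) := by
    simpa using h1.add_const c
  refine ge_of_tendsto h2 ?_
  filter_upwards [h] with n hn
  have h3 : r ‖(z : E) - (x : E)‖ ≤ r (‖(z : E) - (u n : E)‖ + ‖(u n : E) - (x : E)‖) :=
    hr.mono (Set.mem_Ici.2 (norm_nonneg _)) (Set.mem_Ici.2 (by positivity))
      (norm_sub_le_norm_sub_add_norm_sub _ _ _)
  have h4 := hr.subadd ‖(z : E) - (u n : E)‖ ‖(u n : E) - (x : E)‖ (norm_nonneg _) (norm_nonneg _)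
  linarith

/-- Convergence of ρ⁺-Cauchy sequences: under (C1) and (C2), `{f_n}` converges in
`T⁻(ρ_{Φ,r})` towards an element of `Hom(F)`. -/
theorem statement7 {E : Type*} [NormedAddCommGroup E] [NormedSpace ℝ E] [FiniteDimensional ℝ E]
    (F : Set E) (hFnc : ¬ IsCompact F)
    [LocallyConnectedSpace ↥F] [SigmaCompactSpace ↥F] [LocallyCompactSpace ↥F]
    (R : ℝ → ℝ) (hR : GrowthFun R)
    (Φ : F → ℝ) (m β γ : ℝ) (hΦ : MemE F R Φ m β γ)
    (r : ℝ → ℝ) (hr : StandingR r) (hAr : Ar F r)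
    (a b : ℝ) (ha : 0 < a) (hb : 0 < b) (hCrR : ∀ u, 0 ≤ u → R u ≤ a * r u + b)
    (fn : ℕ → F ≃ₜ F)
    (hC1 : ∀ K : Set F, IsCompact K → ∃ M : ℝ, ∀ n : ℕ, ∀ x ∈ K,
      ‖(fn n x : E)‖ ≤ M ∧ ‖((fn n).symm x : E)‖ ≤ M)
    (hC2 : ∀ ε : ℝ, 0 < ε → ∃ N : ℕ, ∀ p q : ℕ, N ≤ q → q ≤ p →
      phiDist F Φ r (fn p) (fn q) ≤ ENNReal.ofReal ε) :
    ∃ f : F ≃ₜ F,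
      Filter.Tendsto (fun n => phiDist F Φ r f (fn n)) Filter.atTop (nhds 0) := by
  have hΦpos : ∀ x, 0 < Φ x := fun x => hΦ.m_pos.trans_le (hΦ.m_le x)
  have hβ : 0 < β := hΦ.gamma_pos.trans hΦ.gamma_lt_beta
  have hΦB : ∀ x : F, Φ x ≤ (β * a) * r ‖(x : E)‖ + β * b := by
    intro x
    have h1 := hΦ.upper x
    have h2 := hCrR ‖(x : E)‖ (norm_nonneg _)
    nlinarith
  have H : ∀ ε : ℝ, 0 < ε → ∃ N : ℕ, ∀ p q : ℕ, N ≤ q → q ≤ p → ∀ x : F,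
      r ‖(fn p ((fn q).symm x) : E) - (x : E)‖ ≤ ε * Φ x ∧
      r ‖((fn p).symm (fn q x) : E) - (x : E)‖ ≤ ε * Φ x := by
    intro ε hε
    obtain ⟨N, hN⟩ := hC2 ε hε
    refine ⟨N, fun p q hq hp x => ?_⟩
    have h := max_le_iff.1 (hN p q hq hp)
    exact ⟨of_phiNorm_le F Φ r hΦpos _ ε hε.le h.1 x, of_phiNorm_le F Φ r hΦpos _ ε hε.le h.2 x⟩
  obtain ⟨f, hf⟩ := limit_aux F Φ r hr (β * a) (β * b) (by positivity) (by positivity) hΦB fn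
    (fun K hK => (hC1 K hK).imp fun M hM n x hx => (hM n x hx).1) H
  obtain ⟨g, hg⟩ := limit_aux F Φ r hr (β * a) (β * b) (by positivity) (by positivity) hΦB
    (fun n => (fn n).symm)
    (fun K hK => (hC1 K hK).imp fun M hM n x hx => (hM n x hx).2)
    (fun ε hε => (H ε hε).imp fun N hN p q hq hp x => (hN p q hq hp x).symm)
  have hfc : Continuous f := hf.continuous (Frequently.of_forall fun n => (fn n).continuous)
  have hgc : Continuous g := hg.continuous (Frequently.of_forall fun n => (fn n).symm.continuous)
  have hfp : ∀ x, Tendsto (fun n => fn n x) atTop (𝓝 (f x)) := fun x =>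
    (tendstoLocallyUniformlyOn_univ.2 hf).tendsto_at (Set.mem_univ x)
  have hgp : ∀ x, Tendsto (fun n => (fn n).symm x) atTop (𝓝 (g x)) := fun x =>
    (tendstoLocallyUniformlyOn_univ.2 hg).tendsto_at (Set.mem_univ x)
  have hgf : ∀ x, g (f x) = x := by
    intro x
    have h := hg.tendsto_comp hgc.continuousAt (hfp x)
    simp only [Homeomorph.symm_apply_apply] at h
    exact tendsto_nhds_unique h tendsto_const_nhds
  have hfg : ∀ x, f (g x) = x := by
    intro x
    have h := hf.tendsto_comp hfc.continuousAt (hgp x)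
    simp only [Homeomorph.apply_symm_apply] at h
    exact tendsto_nhds_unique h tendsto_const_nhds
  let h : F ≃ₜ F :=
    { toFun := f, invFun := g, left_inv := hgf, right_inv := hfg,
      continuous_toFun := hfc, continuous_invFun := hgc }
  refine ⟨h, ?_⟩
  rw [ENNReal.tendsto_nhds_zero]
  intro ε hε
  obtain ⟨ε', hε', hle⟩ : ∃ ε' : ℝ, 0 < ε' ∧ ENNReal.ofReal ε' ≤ ε := by
    obtain ⟨c, hc0, hcε⟩ := ENNReal.lt_iff_exists_nnreal_btwn.1 hε
    exact ⟨c, by exact_mod_cast hc0, by simpa using hcε.le⟩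
  obtain ⟨N, hN⟩ := H ε' hε'
  filter_upwards [eventually_ge_atTop N] with n hn
  refine le_trans (max_le ?_ ?_) hle
  · refine phiNorm_le_of F Φ r hΦpos _ ε' fun x => ?_
    refine limit_est F r hr (fun p => fn p ((fn n).symm x)) _ x (hfp _) _ ?_
    filter_upwards [eventually_ge_atTop n] with p hp
    exact (hN p n hn hp x).1
  · refine phiNorm_le_of F Φ r hΦpos _ ε' fun x => ?_
    refine limit_est F r hr (fun p => (fn p).symm (fn n x)) _ x (hgp _) _ ?_
    filter_upwards [eventually_ge_atTop n] with p hp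
    exact (hN p n hn hp x).2
end
end

section
/- Assume F is locally connected, σ-compact and locally compact. Let Φ ∈ E_F^R and let r satisfy the standing assumptions, with condition (C_{r,R}). Let {f_n} be a sequence in Hom(F) such that (C1) for every compact K ⊆ F the restrictions {f_n|_K} and {f_n⁻¹|_K} are uniformly bounded, and (C2) {f_n} is ρ⁺_{Φ,r}-Cauchy. Then there exists f ∈ Hom(F) such that f_n → f uniformly on every compact subset of F and f_n⁻¹ → f⁻¹ uniformly on every compact subset of F. -/
open Filter Topology
open scoped ENNReal

noncomputable section

/-- The pointwise (and compact-uniform) limit of a sequence of homeomorphisms. -/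
theorem exists_limit_aux {E : Type*} [NormedAddCommGroup E] (F : Set E) [LocallyCompactSpace ↥F]
    (fn : ℕ → F ≃ₜ F)
    (h1 : ∀ K : Set F, IsCompact K → ∃ M : ℝ, ∀ n : ℕ, ∀ x ∈ K, ‖(fn n x : E)‖ ≤ M)
    (H1 : ∀ M δ : ℝ, 0 < δ → ∃ N : ℕ, ∀ p q : ℕ, N ≤ p → N ≤ q → ∀ x : F,
      ‖(fn p x : E)‖ ≤ M → dist (fn p x) (fn q x) < δ)
    (H2 : ∀ M δ : ℝ, 0 < δ → ∃ N : ℕ, ∀ p q : ℕ, N ≤ p → N ≤ q → ∀ x : F,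
      ‖((fn p).symm x : E)‖ ≤ M → dist ((fn p).symm x) ((fn q).symm x) < δ) :
    ∃ f : F → F, Continuous f ∧ (∀ x, Tendsto (fun n => fn n x) atTop (𝓝 (f x))) ∧
      TendstoLocallyUniformly (fun n x => fn n x) f atTop ∧
      ∀ K : Set F, IsCompact K → TendstoUniformlyOn (fun n x => fn n x) f atTop K := by
  have hpt : ∀ x : F, ∃ y : F, Tendsto (fun n => fn n x) atTop (𝓝 y) := by
    intro x
    have hc : CauchySeq (fun n => fn n x) := by
      obtain ⟨M, hM⟩ := h1 {x} isCompact_singleton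
      rw [Metric.cauchySeq_iff]
      intro ε hε
      obtain ⟨N, hN⟩ := H1 M ε hε
      exact ⟨N, fun p hp q hq => hN p q hp hq x (hM p x rfl)⟩
    obtain ⟨K, hK, hKx⟩ := exists_compact_mem_nhds x
    obtain ⟨ε, hε, hb⟩ := Metric.mem_nhds_iff.1 hKx
    obtain ⟨N, hN⟩ := H2 ‖(x : E)‖ ε hε
    have hcomp : IsCompact (fn N '' K) := hK.image (fn N).continuous
    have hmem : ∀ m, N ≤ m → fn m x ∈ fn N '' K := by
      intro m hm
      refine ⟨(fn N).symm (fn m x), hb ?_, by simp⟩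
      have := hN m N hm le_rfl (fn m x) (by simp)
      rw [Metric.mem_ball, dist_comm]
      simpa using this
    obtain ⟨y, -, hy⟩ := hcomp.isComplete (map (fun n => fn n x) atTop) hc
      (le_principal_iff.2 (mem_map.2 (eventually_atTop.2 ⟨N, hmem⟩)))
    exact ⟨y, hy⟩
  choose f hf using hpt
  have hu : ∀ K : Set F, IsCompact K → TendstoUniformlyOn (fun n x => fn n x) f atTop K := by
    intro K hK
    obtain ⟨M, hM⟩ := h1 K hK
    rw [Metric.tendstoUniformlyOn_iff]
    intro ε hε
    obtain ⟨N, hN⟩ := H1 M (ε / 2) (by linarith)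
    filter_upwards [eventually_ge_atTop N] with n hn x hx
    have : dist (f x) (fn n x) ≤ ε / 2 := by
      refine le_of_tendsto ((hf x).dist tendsto_const_nhds) ?_
      filter_upwards [eventually_ge_atTop N] with q hq
      rw [dist_comm]
      exact (hN n q hn hq x (hM n x hx)).le
    linarith
  have hl : TendstoLocallyUniformly (fun n x => fn n x) f atTop :=
    tendstoLocallyUniformly_iff_forall_isCompact.2 hu
  exact ⟨f, hl.continuous (Frequently.of_forall fun n => (fn n).continuous), hf, hl, hu⟩

theorem cauchy_aux {E : Type*} [NormedAddCommGroup E]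
    (F : Set E) (R : ℝ → ℝ)
    (Φ : F → ℝ) (m β γ : ℝ) (hΦ : MemE F R Φ m β γ)
    (r : ℝ → ℝ) (hr : StandingR r)
    (a b : ℝ) (ha : 0 < a) (hb : 0 < b) (hCrR : ∀ u, 0 ≤ u → R u ≤ a * r u + b)
    (fn : ℕ → F ≃ₜ F)
    (hC2 : ∀ ε : ℝ, 0 < ε → ∃ N : ℕ, ∀ p q : ℕ, N ≤ q → q ≤ p →
      ∀ x : F, r ‖(fn p x : E) - (fn q x : E)‖ ≤ ε * Φ (fn q x)) :
    ∀ M δ : ℝ, 0 < δ → ∃ N : ℕ, ∀ p q : ℕ, N ≤ p → N ≤ q → ∀ x : F,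
      ‖(fn p x : E)‖ ≤ M → dist (fn p x) (fn q x) < δ := by
  intro M δ hδ
  have hβ : 0 < β := hΦ.gamma_pos.trans hΦ.gamma_lt_beta
  have hrδ : 0 < r δ := lt_of_le_of_ne (hr.nonneg δ hδ.le)
    (fun h => hδ.ne' ((hr.zero_iff δ hδ.le).1 h.symm))
  set c : ℝ := 2 * β * (a * r |M| + b) with hc
  have hrM := hr.nonneg |M| (abs_nonneg M)
  have hcpos : 0 < c := by positivity
  obtain ⟨ε, hε, hε1, hε2⟩ : ∃ ε : ℝ, 0 < ε ∧ ε * (2 * a * β) ≤ 1 ∧ ε * c < r δ := by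
    refine ⟨min (1 / (2 * a * β)) (r δ / (2 * c)), by positivity, ?_, ?_⟩
    · rw [← le_div_iff₀ (by positivity)]
      exact min_le_left _ _
    · calc _ ≤ r δ / (2 * c) * c := by gcongr; exact min_le_right _ _
        _ = r δ / 2 := by field_simp
        _ < r δ := by linarith
  obtain ⟨N, hN⟩ := hC2 ε hε
  have hup : ∀ y : F, Φ y ≤ β * (a * r ‖(y : E)‖ + b) := fun y =>
    (hΦ.upper y).trans (by gcongr; exact hCrR _ (norm_nonneg _))
  refine ⟨N, fun p q hp hq x hx => ?_⟩
  have hrx : r ‖(fn p x : E)‖ ≤ r |M| :=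
    hr.mono (norm_nonneg _) (abs_nonneg M) (hx.trans (le_abs_self M))
  have key : r ‖(fn p x : E) - (fn q x : E)‖ ≤ ε * c := by
    rcases le_total q p with h | h
    · have h1 := hN p q hq h x
      have h2 : r ‖(fn q x : E)‖ ≤ r ‖(fn p x : E)‖ + r ‖(fn p x : E) - (fn q x : E)‖ := by
        refine le_trans (hr.mono (norm_nonneg _)
          (Set.mem_Ici.2 (add_nonneg (norm_nonneg _) (norm_nonneg _))) ?_)
          (hr.subadd _ _ (norm_nonneg _) (norm_nonneg _))
        rw [norm_sub_rev]
        calc ‖(fn q x : E)‖ = ‖(fn p x : E) + ((fn q x : E) - (fn p x : E))‖ := by abel_nf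
          _ ≤ _ := norm_add_le _ _
      have h3 := hup (fn q x)
      have h4 : Φ (fn q x) ≤ β * (a * (r |M| + ε * Φ (fn q x)) + b) :=
        h3.trans (by gcongr; linarith)
      have h5 : ε * (2 * a * β) * Φ (fn q x) ≤ 1 * Φ (fn q x) :=
        mul_le_mul_of_nonneg_right hε1 (hΦ.nonneg _)
      have h6 : Φ (fn q x) ≤ c := by rw [hc]; linarith
      exact h1.trans (by gcongr)
    · have h1 := hN q p hp h x
      rw [norm_sub_rev]
      refine h1.trans ?_
      gcongr
      refine (hup _).trans ?_
      have : β * (a * r ‖(fn p x : E)‖ + b) ≤ β * (a * r |M| + b) := by gcongr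
      have h0 : 0 < β * (a * r |M| + b) := by positivity
      rw [hc]; linarith
  rw [Subtype.dist_eq, dist_eq_norm]
  by_contra hcon
  have := hr.mono hδ.le (norm_nonneg _) (not_lt.1 hcon)
  linarith

theorem phiNorm_le_aux {E : Type*} [NormedAddCommGroup E] (F : Set E) (Φ : F → ℝ) (r : ℝ → ℝ)
    (hΦ : ∀ x, 0 < Φ x) (f : F → F) (ε : ℝ) (hε : 0 < ε)
    (h : phiNorm F Φ r f ≤ ENNReal.ofReal ε) (x : F) :
    r ‖(f x : E) - (x : E)‖ ≤ ε * Φ x := by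
  have := (le_iSup (fun x : F => ENNReal.ofReal (r ‖(f x : E) - (x : E)‖ / Φ x)) x).trans h
  rw [ENNReal.ofReal_le_ofReal_iff hε.le] at this
  rwa [div_le_iff₀ (hΦ x)] at this

/-- Under (C1) and (C2), there is `f ∈ Hom(F)` with `f_n → f` and `f_n⁻¹ → f⁻¹`
uniformly on every compact subset of `F`. -/
theorem statement9 {E : Type*} [NormedAddCommGroup E] [NormedSpace ℝ E] [FiniteDimensional ℝ E]
    (F : Set E) (hFnc : ¬ IsCompact F)
    [LocallyConnectedSpace ↥F] [SigmaCompactSpace ↥F] [LocallyCompactSpace ↥F]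
    (R : ℝ → ℝ) (hR : GrowthFun R)
    (Φ : F → ℝ) (m β γ : ℝ) (hΦ : MemE F R Φ m β γ)
    (r : ℝ → ℝ) (hr : StandingR r)
    (a b : ℝ) (ha : 0 < a) (hb : 0 < b) (hCrR : ∀ u, 0 ≤ u → R u ≤ a * r u + b)
    (fn : ℕ → F ≃ₜ F)
    (hC1 : ∀ K : Set F, IsCompact K → ∃ M : ℝ, ∀ n : ℕ, ∀ x ∈ K,
      ‖(fn n x : E)‖ ≤ M ∧ ‖((fn n).symm x : E)‖ ≤ M)
    (hC2 : ∀ ε : ℝ, 0 < ε → ∃ N : ℕ, ∀ p q : ℕ, N ≤ q → q ≤ p →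
      phiDist F Φ r (fn p) (fn q) ≤ ENNReal.ofReal ε) :
    ∃ f : F ≃ₜ F,
      (∀ K : Set F, IsCompact K →
        TendstoUniformlyOn (fun n (x : F) => (fn n x : E)) (fun x => (f x : E))
          Filter.atTop K) ∧
      (∀ K : Set F, IsCompact K →
        TendstoUniformlyOn (fun n (x : F) => ((fn n).symm x : E)) (fun x => (f.symm x : E))
          Filter.atTop K) := by
  have hpos : ∀ x, 0 < Φ x := fun x => hΦ.m_pos.trans_le (hΦ.m_le x)
  have A1 := cauchy_aux F R Φ m β γ hΦ r hr a b ha hb hCrR fn (by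
    intro ε hε
    obtain ⟨N, hN⟩ := hC2 ε hε
    refine ⟨N, fun p q hq hpq x => ?_⟩
    have := phiNorm_le_aux F Φ r hpos _ ε hε ((le_max_left _ _).trans (hN p q hq hpq)) (fn q x)
    simpa using this)
  have A2 := cauchy_aux F R Φ m β γ hΦ r hr a b ha hb hCrR (fun n => (fn n).symm) (by
    intro ε hε
    obtain ⟨N, hN⟩ := hC2 ε hε
    refine ⟨N, fun p q hq hpq x => ?_⟩
    have := phiNorm_le_aux F Φ r hpos _ ε hε ((le_max_right _ _).trans (hN p q hq hpq))
      ((fn q).symm x)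
    simpa using this)
  obtain ⟨f, fc, fp, fl, fu⟩ := exists_limit_aux F fn
    (fun K hK => (hC1 K hK).imp fun M h n x hx => (h n x hx).1) A1 A2
  obtain ⟨g, gc, gp, gl, gu⟩ := exists_limit_aux F (fun n => (fn n).symm)
    (fun K hK => (hC1 K hK).imp fun M h n x hx => (h n x hx).2) A2 A1
  have hfg : ∀ x, f (g x) = x := fun x =>
    tendsto_nhds_unique (fl.tendsto_comp fc.continuousAt (gp x)) (by simp)
  have hgf : ∀ x, g (f x) = x := fun x =>
    tendsto_nhds_unique (gl.tendsto_comp gc.continuousAt (fp x)) (by simp)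
  refine ⟨⟨⟨f, g, hgf, hfg⟩, fc, gc⟩, fun K hK => ?_, fun K hK => ?_⟩
  · exact uniformContinuous_subtype_val.comp_tendstoUniformlyOn (fu K hK)
  · exact uniformContinuous_subtype_val.comp_tendstoUniformlyOn (gu K hK)
end
end

section
/- Let f, g ∈ L_r(F) and let Φ ∈ E_F^R be a common generalized eigenfunction solving the problem P_α for some α > 1, i.e. Φ(f(x)) ≥ α·λ_r(f)·Φ(x) and Φ(g(x)) ≥ α·λ_r(g)·Φ(x) for all x ∈ F. Then the conjugacy operator L_{f,g} is a contraction for the premetric ρ_{Φ,r}: for all h₁, h₂ ∈ Hom(F), ρ_{Φ,r}(L_{f,g}(h₁), L_{f,g}(h₂)) ≤ (1/α)·ρ_{Φ,r}(h₁, h₂). -/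
open Filter Topology
open scoped ENNReal

noncomputable section

theorem phiNorm_conj_le {E : Type*} [NormedAddCommGroup E]
    (F : Set E) (Φ : F → ℝ) (hΦ : ∀ x, 0 < Φ x)
    (r : ℝ → ℝ) (hr : StandingR r)
    (f : F ≃ₜ F) (hf : f ∈ LipGroup F r)
    (α : ℝ) (hα : 1 < α)
    (hPf : ∀ x : F, α * (lambdaR F r ⇑f).toReal * Φ x ≤ Φ (f x)) (k : F → F) :
    phiNorm F Φ r (fun x => f (k (f.symm x))) ≤ ENNReal.ofReal (1 / α) * phiNorm F Φ r k := by
  have hα0 : 0 < α := by linarith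
  unfold phiNorm
  refine iSup_le fun x => ?_
  obtain ⟨y, rfl⟩ := f.surjective x
  simp only [f.symm_apply_apply]
  refine le_trans ?_ (mul_le_mul_right (le_iSup _ y) _)
  rw [← ENNReal.ofReal_mul (by positivity)]
  apply ENNReal.ofReal_le_ofReal
  by_cases hk : k y = y
  · have h0 : r 0 = 0 := (hr.zero_iff 0 le_rfl).2 rfl
    simp [hk, h0]
  · have hne : ‖(k y : E) - (y : E)‖ ≠ 0 := by
      rw [norm_ne_zero_iff, sub_ne_zero]
      exact fun h => hk (Subtype.ext h)
    have hb : 0 < r ‖(k y : E) - (y : E)‖ :=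
      lt_of_le_of_ne (hr.nonneg _ (norm_nonneg _))
        (fun h => hne ((hr.zero_iff _ (norm_nonneg _)).1 h.symm))
    have hle : ENNReal.ofReal (r ‖(f (k y) : E) - (f y : E)‖ / r ‖(k y : E) - (y : E)‖)
        ≤ lambdaR F r ⇑f :=
      le_iSup_of_le (k y) (le_iSup_of_le y (le_iSup_of_le hk le_rfl))
    have hl := (ENNReal.ofReal_le_iff_le_toReal hf.1.ne).1 hle
    rw [div_le_iff₀ hb] at hl
    have hP := hPf y
    have hy := hΦ y
    have hfy := hΦ (f y)
    rw [one_div, ← div_eq_inv_mul, div_div, div_le_div_iff₀ hfy (by positivity)]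
    have h1 := mul_le_mul_of_nonneg_right hl (by positivity : 0 ≤ Φ y * α)
    have h2 := mul_le_mul_of_nonneg_left hP hb.le
    linarith

/-- If `Φ ∈ E_F^R` solves the generalized eigenvalue problem `P_α` for `f, g ∈ L_r(F)` and
`α > 1`, then the conjugacy operator `L_{f,g}` is a `(1/α)`-contraction for `ρ_{Φ,r}`. -/
theorem statement12 {E : Type*} [NormedAddCommGroup E] [NormedSpace ℝ E] [FiniteDimensional ℝ E]
    (F : Set E) (hFnc : ¬ IsCompact F)
    (R : ℝ → ℝ) (hR : GrowthFun R)
    (Φ : F → ℝ) (m β γ : ℝ) (hΦ : MemE F R Φ m β γ)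
    (r : ℝ → ℝ) (hr : StandingR r)
    (f g : F ≃ₜ F) (hf : f ∈ LipGroup F r) (hg : g ∈ LipGroup F r)
    (α : ℝ) (hα : 1 < α)
    (hPf : ∀ x : F, α * (lambdaR F r ⇑f).toReal * Φ x ≤ Φ (f x))
    (hPg : ∀ x : F, α * (lambdaR F r ⇑g).toReal * Φ x ≤ Φ (g x)) :
    ∀ h₁ h₂ : F ≃ₜ F,
      phiDist F Φ r (conjOp F f g h₁) (conjOp F f g h₂) ≤
        ENNReal.ofReal (1 / α) * phiDist F Φ r h₁ h₂ := by
  intro h₁ h₂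
  have hpos : ∀ x, 0 < Φ x := fun x => lt_of_lt_of_le hΦ.m_pos (hΦ.m_le x)
  unfold phiDist
  refine max_le ?_ ?_
  · refine le_trans ?_ (mul_le_mul_right (le_max_left _ _) _)
    refine le_trans (le_of_eq ?_) (phiNorm_conj_le F Φ hpos r hr f hf α hα hPf _)
    congr 1
    funext x
    simp [conjOp]
  · refine le_trans ?_ (mul_le_mul_right (le_max_right _ _) _)
    refine le_trans (le_of_eq ?_) (phiNorm_conj_le F Φ hpos r hr g hg α hα hPg _)
    congr 1
    funext x
    simp [conjOp]
end
end

section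
/- Let E be a real normed vector space, F a subset of E, f : F → F a map with λ_r(f) < ∞, α > 1, and A : E → E an invertible continuous linear map such that ‖A⁻¹‖⁻¹ ≥ α·λ_r(f). If Ψ : F → E satisfies the generalized Schröder equation Ψ(f(x)) = A(Ψ(x)) for all x ∈ F, then Φ(x) := ‖Ψ(x)‖ satisfies Φ(f(x)) ≥ α·λ_r(f)·Φ(x) for all x ∈ F, i.e. Φ is a generalized eigenfunction of the Koopman operator U_f with generalized eigenvalue α·λ_r(f). -/
open Filter Topology
open scoped ENNReal

noncomputable section

/-- A solution `Ψ` of the generalized Schröder equation `Ψ∘f = A∘Ψ` with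
`‖A⁻¹‖⁻¹ ≥ α·λ_r(f)` yields the generalized eigenfunction `Φ = ‖Ψ(⬝)‖` of the Koopman
operator `U_f`, with generalized eigenvalue `α·λ_r(f)`. -/
theorem statement17 {E : Type*} [NormedAddCommGroup E] [NormedSpace ℝ E]
    (F : Set E) (r : ℝ → ℝ) (hr : StandingR r)
    (f : F → F) (hf : lambdaR F r f < ⊤)
    (α : ℝ) (hα : 1 < α)
    (A : E ≃L[ℝ] E)
    (hA : α * (lambdaR F r f).toReal ≤ ‖(A.symm : E →L[ℝ] E)‖⁻¹)
    (Ψ : F → E) (hΨ : ∀ x : F, Ψ (f x) = A (Ψ x)) :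
    ∀ x : F, α * (lambdaR F r f).toReal * ‖Ψ x‖ ≤ ‖Ψ (f x)‖ := by
  intro x
  have h : ‖Ψ x‖ ≤ ‖(A.symm : E →L[ℝ] E)‖ * ‖A (Ψ x)‖ := by
    simpa using (A.symm : E →L[ℝ] E).le_opNorm (A (Ψ x))
  rw [hΨ x]
  exact (mul_le_mul_of_nonneg_right hA (norm_nonneg _)).trans
    (inv_mul_le_of_le_mul₀ (norm_nonneg _) (norm_nonneg _) h)
end
end
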